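/- arXiv:2409.18030 — 2 statements merged into one kernel-verified Lean document; each statement's English description precedes it below -/
import Mathlib

section
/- Let F be a finite field of cardinality q and let f be a polynomial over F of degree n > 0. Then f is irreducible if and only if (1) f divides X^(q^n) − X, and (2) for every prime t dividing n, f is coprime to X^(q^(n/t)) − X (i.e., there exist polynomials u, v over F with u·f + v·(X^(q^(n/t)) − X) = 1). -/
open Polynomial

/-- **Rabin's irreducibility test.** A polynomial `f` of positive degree over a finite
field `F` with `q` elements is irreducible iff `f ∣ X^(q^n) - X` and for every prime `t`
dividing `n = deg f`, `f` is coprime to `X^(q^(n/t)) - X`. -/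
theorem irreducible_iff_dvd_X_pow_sub_X {F : Type*} [Field F] [Fintype F]
    (f : F[X]) (hd : 0 < f.natDegree) :
    Irreducible f ↔
      f ∣ (X ^ (Fintype.card F) ^ f.natDegree - X) ∧
        ∀ t : ℕ, Nat.Prime t → t ∣ f.natDegree →
          IsCoprime f (X ^ (Fintype.card F) ^ (f.natDegree / t) - X) := by
  have key : ∀ (g : F[X]) (n : ℕ), Irreducible g →
      (g.natDegree ∣ n ↔ g ∣ X ^ (Fintype.card F) ^ n - X) := by
    intro g n hg
    rw [← Nat.card_eq_fintype_card]
    exact hg.natDegree_dvd_iff_dvd_X_pow_card_pow_sub_X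
  constructor
  · intro hf
    refine ⟨(key f _ hf).1 dvd_rfl, fun t ht htn => ?_⟩
    rw [hf.coprime_iff_not_dvd, ← key f _ hf]
    intro h
    have h1 : f.natDegree / t < f.natDegree := Nat.div_lt_self hd ht.one_lt
    have h2 : 0 < f.natDegree / t := Nat.div_pos (Nat.le_of_dvd hd htn) ht.pos
    exact absurd (Nat.le_of_dvd h2 h) (not_le.2 h1)
  · rintro ⟨h1, h2⟩
    have hf0 : f ≠ 0 := by rintro rfl; simp at hd
    have hfu : ¬ IsUnit f := fun h => hd.ne' (natDegree_eq_zero_of_isUnit h)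
    obtain ⟨g, hg, hgf⟩ := WfDvdMonoid.exists_irreducible_factor hfu hf0
    obtain ⟨k, hk⟩ := (key g _ hg).2 (hgf.trans h1)
    by_cases hk1 : k = 1
    · have hdeg : f.natDegree ≤ g.natDegree := by rw [hk, hk1, mul_one]
      exact (associated_of_dvd_of_natDegree_le hgf hf0 hdeg).irreducible hg
    · exfalso
      obtain ⟨t, ht, m, rfl⟩ := Nat.exists_prime_and_dvd hk1
      have hq : f.natDegree / t = g.natDegree * m :=
        Nat.div_eq_of_eq_mul_right ht.pos (by rw [hk]; ring)
      have hc := h2 t ht ⟨g.natDegree * m, by rw [hk]; ring⟩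
      have hgd := (key g (f.natDegree / t) hg).1 (hq ▸ dvd_mul_right _ _)
      exact hg.not_isUnit (hc.isUnit_of_dvd' hgf hgd)
end

section
/- Let f = X^3 − 30X − 80 ∈ ℚ[X] (which is irreducible over ℚ) and let K = ℚ[X]/⟨f⟩, a number field of degree 3. Then the discriminant of the number field K equals −16200. -/
open Polynomial

namespace KDiscr

lemma arith2 {a b c t n m : ℤ} (ht : 3 * a + 30 * c = 2 * t)
    (hn : a * ((a + 15 * c)^2 - 2 * b * (15 * b + 20 * c)) - 40 * c * (b * (a + 15 * c) - c * (15 * b + 20 * c))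
      + 40 * b * (2 * b^2 - c * (a + 15 * c)) = 8 * n)
    (hm : (a+2) * (((a+2) + 15 * c)^2 - 2 * b * (15 * b + 20 * c)) - 40 * c * (b * ((a+2) + 15 * c) - c * (15 * b + 20 * c))
      + 40 * b * (2 * b^2 - c * ((a+2) + 15 * c)) = 8 * m) : 2 ∣ a ∧ 2 ∣ b ∧ 2 ∣ c := by
  have ha : 2 ∣ a := by omega
  obtain ⟨x, rfl⟩ := ha
  have hc : 2 ∣ c := by
    have : (2:ℤ) ∣ c ^ 2 := by
      ring_nf at hn hm
      omega
    exact Int.prime_two.dvd_of_dvd_pow this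
  obtain ⟨y, rfl⟩ := hc
  have hb : 2 ∣ b := by
    have : (2:ℤ) ∣ b ^ 2 := by
      ring_nf at hn hm
      omega
    exact Int.prime_two.dvd_of_dvd_pow this
  exact ⟨⟨_, rfl⟩, hb, ⟨_, rfl⟩⟩

lemma arith3 {a b c n : ℤ}
    (hn : a * ((a + 15 * c)^2 - 2 * b * (15 * b + 20 * c)) - 40 * c * (b * (a + 15 * c) - c * (15 * b + 20 * c))
      + 40 * b * (2 * b^2 - c * (a + 15 * c)) = 27 * n) : 3 ∣ a ∧ 3 ∣ b ∧ 3 ∣ c := by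
  obtain ⟨x, hx⟩ : ∃ x, x = 2 * a - 2 * b + c := ⟨_, rfl⟩
  obtain rfl : c = x - 2 * a + 2 * b := by omega
  have h1 : 3 ∣ x := by
    have : (3:ℤ) ∣ x ^ 3 := by
      ring_nf at hn
      omega
    exact Int.prime_three.dvd_of_dvd_pow this
  obtain ⟨x, rfl⟩ := h1
  obtain ⟨y, hy⟩ : ∃ y, y = b - (3 * x - 2 * a + 2 * b) := ⟨_, rfl⟩
  obtain rfl : b = 2 * a - 3 * x - y := by omega
  have h1 : 3 ∣ y := by
    have : (3:ℤ) ∣ y ^ 3 := by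
      ring_nf at hn
      omega
    exact Int.prime_three.dvd_of_dvd_pow this
  obtain ⟨y, rfl⟩ := h1
  have h1 : 3 ∣ a := by
    have : (3:ℤ) ∣ a ^ 3 := by
      ring_nf at hn
      omega
    exact Int.prime_three.dvd_of_dvd_pow this
  omega

lemma arith5 {a b c n : ℤ}
    (hn : a * ((a + 15 * c)^2 - 2 * b * (15 * b + 20 * c)) - 40 * c * (b * (a + 15 * c) - c * (15 * b + 20 * c))
      + 40 * b * (2 * b^2 - c * (a + 15 * c)) = 125 * n) : 5 ∣ a ∧ 5 ∣ b ∧ 5 ∣ c := by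
  have p5 : Prime (5:ℤ) := by norm_num
  have h1 : 5 ∣ a := by
    have : (5:ℤ) ∣ a ^ 3 := by
      ring_nf at hn
      omega
    exact p5.dvd_of_dvd_pow this
  obtain ⟨a, rfl⟩ := h1
  have h1 : 5 ∣ b := by
    have : (5:ℤ) ∣ b ^ 3 := by
      ring_nf at hn
      omega
    exact p5.dvd_of_dvd_pow this
  obtain ⟨b, rfl⟩ := h1
  have h1 : 5 ∣ c := by
    have : (5:ℤ) ∣ c ^ 3 := by
      ring_nf at hn
      omega
    exact p5.dvd_of_dvd_pow this
  omega

variable {K : Type*} [Field K] [NumberField K]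

/-- multiplication matrix of `a + b α + c β`. -/
def M (a b c : ℚ) : Matrix (Fin 3) (Fin 3) ℚ :=
  !![a, 40 * c, 40 * b; b, a + 15 * c, 15 * b + 20 * c; c, 2 * b, a + 15 * c]

lemma lmul (B : Module.Basis (Fin 3) ℚ K) (x y : K) (h0 : B 0 = 1) (h1 : B 1 = x) (h2 : B 2 = y)
    (hxx : x * x = 2 * y) (hxy : x * y = 15 * x + 40) (hyy : y * y = 15 * y + 20 * x) (a b c : ℚ) :
    Algebra.leftMulMatrix B (a + b * x + c * y) = M a b c := by
  have key : ∀ j, (a + b * x + c * y) * B j = ∑ i, M a b c i j • B i := by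
    intro j
    fin_cases j <;> simp [Fin.sum_univ_three, h0, h1, h2, M, Algebra.smul_def]
    · linear_combination b * hxx + c * hxy
    · linear_combination b * hxy + c * hyy
  ext i j
  rw [Algebra.leftMulMatrix_eq_repr_mul, key]
  simp [Finsupp.single_apply]

lemma norm_eq (B : Module.Basis (Fin 3) ℚ K) (x y : K) (h0 : B 0 = 1) (h1 : B 1 = x) (h2 : B 2 = y)
    (hxx : x * x = 2 * y) (hxy : x * y = 15 * x + 40) (hyy : y * y = 15 * y + 20 * x) (a b c : ℚ) :
    Algebra.norm ℚ (a + b * x + c * y) = a * ((a + 15 * c)^2 - 2 * b * (15 * b + 20 * c)) - 40 * c * (b * (a + 15 * c) - c * (15 * b + 20 * c))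
      + 40 * b * (2 * b^2 - c * (a + 15 * c)) := by
  rw [Algebra.norm_eq_matrix_det B, lmul B x y h0 h1 h2 hxx hxy hyy, M, Matrix.det_fin_three]
  simp
  ring

lemma trace_eq (B : Module.Basis (Fin 3) ℚ K) (x y : K) (h0 : B 0 = 1) (h1 : B 1 = x) (h2 : B 2 = y)
    (hxx : x * x = 2 * y) (hxy : x * y = 15 * x + 40) (hyy : y * y = 15 * y + 20 * x) (a b c : ℚ) :
    Algebra.trace ℚ K (a + b * x + c * y) = 3 * a + 30 * c := by
  rw [Algebra.trace_eq_matrix_trace B, lmul B x y h0 h1 h2 hxx hxy hyy, M, Matrix.trace_fin_three]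
  simp
  ring

lemma int_norm {z : K} (hz : IsIntegral ℤ z) : ∃ n : ℤ, (n : ℚ) = Algebra.norm ℚ z := by
  simpa using IsIntegrallyClosed.isIntegral_iff.1 (Algebra.isIntegral_norm ℚ hz)

lemma int_trace {z : K} (hz : IsIntegral ℤ z) : ∃ n : ℤ, (n : ℚ) = Algebra.trace ℚ K z := by
  simpa using IsIntegrallyClosed.isIntegral_iff.1 (Algebra.isIntegral_trace (L := ℚ) (F := K) hz)

lemma norm_int (B : Module.Basis (Fin 3) ℚ K) (x y : K) (h0 : B 0 = 1) (h1 : B 1 = x) (h2 : B 2 = y)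
    (hxx : x * x = 2 * y) (hxy : x * y = 15 * x + 40) (hyy : y * y = 15 * y + 20 * x) (p a b c : ℤ)
    (z : K) (hz : IsIntegral ℤ z) (h : p * z = a + b * x + c * y) :
    ∃ n : ℤ, a * ((a + 15 * c)^2 - 2 * b * (15 * b + 20 * c)) - 40 * c * (b * (a + 15 * c) - c * (15 * b + 20 * c))
      + 40 * b * (2 * b^2 - c * (a + 15 * c)) = p ^ 3 * n := by
  obtain ⟨n, hn⟩ := int_norm hz
  refine ⟨n, ?_⟩
  have e := norm_eq B x y h0 h1 h2 hxx hxy hyy a b c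
  have : ((a:ℚ):K) + ((b:ℚ):K) * x + ((c:ℚ):K) * y = algebraMap ℚ K p * z := by
    simp [h]
  rw [this, map_mul, Algebra.norm_algebraMap, ← hn, Module.finrank_eq_card_basis B] at e
  simp at e
  exact_mod_cast e.symm

lemma trace_int (B : Module.Basis (Fin 3) ℚ K) (x y : K) (h0 : B 0 = 1) (h1 : B 1 = x) (h2 : B 2 = y)
    (hxx : x * x = 2 * y) (hxy : x * y = 15 * x + 40) (hyy : y * y = 15 * y + 20 * x) (p a b c : ℤ)
    (z : K) (hz : IsIntegral ℤ z) (h : p * z = a + b * x + c * y) :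
    ∃ n : ℤ, 3 * a + 30 * c = p * n := by
  obtain ⟨n, hn⟩ := int_trace hz
  refine ⟨n, ?_⟩
  have e := trace_eq B x y h0 h1 h2 hxx hxy hyy a b c
  have : ((a:ℚ):K) + ((b:ℚ):K) * x + ((c:ℚ):K) * y = (p:ℚ) • z := by
    simp [h, Algebra.smul_def]
  rw [this, map_smul, ← hn] at e
  simp at e
  exact_mod_cast e.symm

/-- The order spanned by `1, x, y`. -/
def Lam (x y : K) (hxx : x * x = 2 * y) (hxy : x * y = 15 * x + 40)
    (hyy : y * y = 15 * y + 20 * x) : Subalgebra ℤ K where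
  carrier := {z | ∃ a b c : ℤ, z = a + b * x + c * y}
  mul_mem' := by
    rintro _ _ ⟨a, b, c, rfl⟩ ⟨d, e, f, rfl⟩
    refine ⟨a * d + 40 * (b * f + c * e), a * e + b * d + 15 * (b * f + c * e) + 20 * c * f,
      a * f + c * d + 2 * b * e + 15 * c * f, ?_⟩
    push_cast
    linear_combination b * e * hxx + (b * f + c * e) * hxy + c * f * hyy
  add_mem' := by
    rintro _ _ ⟨a, b, c, rfl⟩ ⟨d, e, f, rfl⟩
    exact ⟨a + d, b + e, c + f, by push_cast; ring⟩
  algebraMap_mem' := fun r => ⟨r, 0, 0, by simp⟩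

lemma descent (B : Module.Basis (Fin 3) ℚ K) (x y : K) (h0 : B 0 = 1) (h1 : B 1 = x) (h2 : B 2 = y)
    (hxx : x * x = 2 * y) (hxy : x * y = 15 * x + 40) (hyy : y * y = 15 * y + 20 * x) (p : ℤ)
    (hp : p = 2 ∨ p = 3 ∨ p = 5)
    (z : K) (hz : IsIntegral ℤ z) (h : p * z ∈ Lam x y hxx hxy hyy) : z ∈ Lam x y hxx hxy hyy := by
  obtain ⟨a, b, c, h⟩ := h
  obtain ⟨n, hn⟩ := norm_int B x y h0 h1 h2 hxx hxy hyy p a b c z hz h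
  have hd : p ∣ a ∧ p ∣ b ∧ p ∣ c := by
    rcases hp with rfl | rfl | rfl
    · obtain ⟨t, ht⟩ := trace_int B x y h0 h1 h2 hxx hxy hyy 2 a b c z hz h
      obtain ⟨m, hm⟩ := norm_int B x y h0 h1 h2 hxx hxy hyy 2 (a + 2) b c (z + 1)
        (hz.add isIntegral_one) (by push_cast at h ⊢; linear_combination h)
      exact arith2 ht hn hm
    · exact arith3 hn
    · exact arith5 hn
  have p0 : (p : K) ≠ 0 := by
    rcases hp with rfl | rfl | rfl <;> norm_num
  obtain ⟨⟨a, rfl⟩, ⟨b, rfl⟩, ⟨c, rfl⟩⟩ := hd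
  refine ⟨a, b, c, mul_left_cancel₀ p0 ?_⟩
  rw [h]
  push_cast
  ring

lemma discrB (B : Module.Basis (Fin 3) ℚ K) (x y : K) (h0 : B 0 = 1) (h1 : B 1 = x) (h2 : B 2 = y)
    (hxx : x * x = 2 * y) (hxy : x * y = 15 * x + 40) (hyy : y * y = 15 * y + 20 * x) :
    Algebra.discr ℚ B = -16200 := by
  have T := trace_eq B x y h0 h1 h2 hxx hxy hyy
  have t00 : Algebra.trace ℚ K 1 = 3 := by simpa using T 1 0 0
  have t01 : Algebra.trace ℚ K x = 0 := by simpa using T 0 1 0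
  have t02 : Algebra.trace ℚ K y = 30 := by simpa using T 0 0 1
  have t11 : Algebra.trace ℚ K (x * x) = 60 := by
    have := T 0 0 2
    norm_num at this
    rw [hxx, this]
  have t12 : Algebra.trace ℚ K (x * y) = 120 := by
    have := T 40 15 0
    norm_num at this
    rw [hxy, add_comm, map_add, this]
  have t22 : Algebra.trace ℚ K (y * y) = 450 := by
    have := T 0 20 15
    norm_num at this
    rw [hyy, add_comm, map_add, this]
  rw [Algebra.discr_def, Matrix.det_fin_three]
  simp only [Algebra.traceMatrix_apply, Algebra.traceForm_apply, h0, h1, h2, one_mul, mul_one,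
    mul_comm y x, t00, t01, t02, t11, t12, t22]
  norm_num

lemma main (B : Module.Basis (Fin 3) ℚ K) (x y : K) (h0 : B 0 = 1) (h1 : B 1 = x) (h2 : B 2 = y)
    (hxx : x * x = 2 * y) (hxy : x * y = 15 * x + 40) (hyy : y * y = 15 * y + 20 * x) :
    NumberField.discr K = -16200 := by
  have hx : IsIntegral ℤ x := by
    refine ⟨X ^ 3 - C 30 * X - C 80, by monicity!, ?_⟩
    simp
    linear_combination x * hxx + 2 * hxy
  have hy : IsIntegral ℤ y := by
    have : IsIntegral ℤ (y * y - 15 * y) := by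
      rw [hyy]
      simpa using (isIntegral_algebraMap (R := ℤ) (x := 20)).mul hx
    refine ⟨X ^ 3 - C 30 * X ^ 2 + C 225 * X - C 800, by monicity!, ?_⟩
    simp
    linear_combination (y - 15) * hyy + 20 * hxy
  have hB : ∀ i, IsIntegral ℤ (B i) := by
    intro i
    fin_cases i
    · simpa [h0] using isIntegral_one
    · simpa [h1] using hx
    · simpa [h2] using hy
  have hD := discrB B x y h0 h1 h2 hxx hxy hyy
  have hL : ∀ z : K, IsIntegral ℤ z → z ∈ Lam x y hxx hxy hyy := by
    intro z hz
    have d := descent B x y h0 h1 h2 hxx hxy hyy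
    have hbig : (16200 : K) * z ∈ Lam x y hxx hxy hyy := by
      obtain ⟨a, b, c, e⟩ : ∃ a b c : ℚ, z = a + b * x + c * y := by
        refine ⟨B.repr z 0, B.repr z 1, B.repr z 2, ?_⟩
        conv_lhs => rw [← B.sum_repr z]
        simp [Fin.sum_univ_three, h0, h1, h2, Algebra.smul_def]
      have T := trace_eq B x y h0 h1 h2 hxx hxy hyy
      obtain ⟨n0, e0⟩ := int_trace hz
      obtain ⟨n1, e1⟩ := int_trace (hz.mul hx)
      obtain ⟨n2, e2⟩ := int_trace (hz.mul hy)
      rw [e, T] at e0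
      rw [show z * x = ((40 * c : ℚ) : K) + ((a + 15 * c : ℚ) : K) * x + ((2 * b : ℚ) : K) * y by
        rw [e]; push_cast; linear_combination b * hxx + c * hxy, T] at e1
      rw [show z * y = ((40 * b : ℚ) : K) + ((15 * b + 20 * c : ℚ) : K) * x
          + ((a + 15 * c : ℚ) : K) * y by
        rw [e]; push_cast; linear_combination b * hxy + c * hyy, T] at e2
      have hc : ((180 * (10 * n0 + 2 * n1 - n2) : ℤ) : ℚ) = 16200 * c := by
        push_cast; linarith
      have hb : ((270 * n1 - 360 * (10 * n0 + 2 * n1 - n2) : ℤ) : ℚ) = 16200 * b := by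
        push_cast; linarith
      have ha : ((5400 * n0 - 1800 * (10 * n0 + 2 * n1 - n2) : ℤ) : ℚ) = 16200 * a := by
        push_cast; linarith
      refine ⟨5400 * n0 - 1800 * (10 * n0 + 2 * n1 - n2),
        270 * n1 - 360 * (10 * n0 + 2 * n1 - n2), 180 * (10 * n0 + 2 * n1 - n2), ?_⟩
      · rw [← Rat.cast_intCast (5400 * n0 - 1800 * (10 * n0 + 2 * n1 - n2)),
          ← Rat.cast_intCast (270 * n1 - 360 * (10 * n0 + 2 * n1 - n2)),
          ← Rat.cast_intCast (180 * (10 * n0 + 2 * n1 - n2)), ha, hb, hc, e]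
        push_cast
        ring
    have i2 : ∀ k : ℤ, IsIntegral ℤ ((k : K) * z) := fun k => by
      simpa using (isIntegral_algebraMap (R := ℤ) (x := k)).mul hz
    have step : ∀ p k : ℤ, (p = 2 ∨ p = 3 ∨ p = 5) → ((p * k : ℤ) : K) * z ∈ Lam x y hxx hxy hyy →
        (k : K) * z ∈ Lam x y hxx hxy hyy := by
      intro p k hp h
      refine d p hp _ (i2 k) ?_
      rw [← mul_assoc]
      exact_mod_cast h
    have s1 := step 2 8100 (by simp) (by norm_num; exact hbig)
    have s2 := step 2 4050 (by simp) (by norm_num at s1 ⊢; exact s1)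
    have s3 := step 2 2025 (by simp) (by norm_num at s2 ⊢; exact s2)
    have s4 := step 3 675 (by simp) (by norm_num at s3 ⊢; exact s3)
    have s5 := step 3 225 (by simp) (by norm_num at s4 ⊢; exact s4)
    have s6 := step 3 75 (by simp) (by norm_num at s5 ⊢; exact s5)
    have s7 := step 3 25 (by simp) (by norm_num at s6 ⊢; exact s6)
    have s8 := step 5 5 (by simp) (by norm_num at s7 ⊢; exact s7)
    have s9 := step 5 1 (by simp) (by norm_num at s8 ⊢; exact s8)
    simpa using s9
  have hrep : ∀ z : K, IsIntegral ℤ z → ∀ i, IsIntegral ℤ (B.repr z i) := by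
    intro z hz i
    obtain ⟨a, b, c, rfl⟩ := hL z hz
    have : (a : K) + b * x + c * y = (a : ℚ) • B 0 + (b : ℚ) • B 1 + (c : ℚ) • B 2 := by
      simp [h0, h1, h2, Algebra.smul_def]
    rw [this]
    have q : ∀ k : ℤ, IsIntegral ℤ (k : ℚ) := fun k => isIntegral_algebraMap (R := ℤ) (x := k)
    fin_cases i <;> simp [Finsupp.single_apply, q]
  have := NumberField.coe_discr K
  rw [Algebra.discr_eq_discr_of_toMatrix_coeff_isIntegral K (b := NumberField.integralBasis K) (b' := B) ?_ ?_, hD] at this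
  · exact_mod_cast this
  · intro i j
    rw [Module.Basis.toMatrix_apply]
    obtain ⟨w, hw⟩ : ∃ w : NumberField.RingOfIntegers K, (w : K) = B j := ⟨⟨B j, hB j⟩, rfl⟩
    rw [← hw, NumberField.integralBasis_repr_apply]
    exact isIntegral_algebraMap
  · intro i j
    rw [Module.Basis.toMatrix_apply]
    apply hrep
    rw [NumberField.integralBasis_apply]
    exact NumberField.RingOfIntegers.isIntegral_coe _

end KDiscr

/-- The number field `K = ℚ[X]/⟨X³ - 30X - 80⟩` (the polynomial is irreducible over
`ℚ`, so `K` is a number field of degree 3) has discriminant `-16200`. -/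
theorem K_discr [Fact (Irreducible (X ^ 3 - C (30 : ℚ) * X - C 80))] :
    NumberField.discr (AdjoinRoot (X ^ 3 - C (30 : ℚ) * X - C 80)) = -16200 := by
  set f := (X ^ 3 - C (30 : ℚ) * X - C 80) with hf
  have f0 : f ≠ 0 := (Fact.out : Irreducible f).ne_zero
  have hdeg : f.natDegree = 3 := by rw [hf]; compute_degree!
  set x : AdjoinRoot f := AdjoinRoot.root f with hx
  have hr : x ^ 3 - 30 * x - 80 = 0 := by
    have := AdjoinRoot.eval₂_root f
    rw [← hx] at this
    have h2 : ∀ g, g = f → eval₂ (AdjoinRoot.of f) x g = 0 := by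
      rintro g rfl; exact this
    have h3 := h2 _ hf.symm
    simpa using h3
  let P := AdjoinRoot.powerBasis f0
  have hdim : P.dim = 3 := hdeg
  let B := (P.basis.reindex (finCongr hdim)).isUnitSMul (w := ![1, 1, (1/2 : ℚ)]) (by
    intro i; fin_cases i <;> simp)
  have hg : P.gen = x := rfl
  refine KDiscr.main B x (x ^ 2 / 2) ?_ ?_ ?_ ?_ ?_ ?_
  · refine (Module.Basis.isUnitSMul_apply _ _).trans ?_
    simp
  · refine (Module.Basis.isUnitSMul_apply _ _).trans ?_
    simp [hg]
  · refine (Module.Basis.isUnitSMul_apply _ _).trans ?_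
    simp [hg, Algebra.smul_def]
    ring
  · ring
  · linear_combination hr / 2
  · linear_combination x * hr / 4
end
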